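/- arXiv:2305.08536 — 2 statements merged into one kernel-verified Lean document; each statement's English description precedes it below -/
import Mathlib

section
/- Let J ∈ ℝ^{n×n} be symmetric with zero diagonal, μ ≥ 0, and L(θ) = −∑_{1≤i<j≤n} J_{ij} cos(θ_i − θ_j) + (μ/2) ∑_{i=1}^n sin²θ_i. If θ: ℝ → ℝ^n is differentiable and satisfies the oscillator-based Ising machine dynamics θ̇_i(t) = −∑_{j ≠ i} J_{ij} sin(θ_i(t) − θ_j(t)) − (μ/2) sin(2θ_i(t)) for all i and t, then for all t, (d/dt) L(θ(t)) = −∑_{i=1}^n θ̇_i(t)² ≤ 0; that is, L is a Lyapunov function for the dynamics. -/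
open Finset Real

/-! The dynamics is the gradient flow `θ̇ = -∇L`, so `L` decreases along it at the rate
`‖∇L‖² = ‖θ̇‖²`. To identify the gradient of the coupling term, note that `J i j * sin (θ i - θ j)`
is antisymmetric in `(i, j)`: differentiating the term of a pair `i < j` therefore contributes the
`j`-th summand of `∂L/∂θ i` and the `i`-th summand of `∂L/∂θ j`. -/

section PairSums

variable {ι : Type*} [Fintype ι] [LinearOrder ι]

theorem sum_sum_lt_add_eq_sum_sum_ne {M : Type*} [AddCommMonoid M] (f : ι → ι → M) :
    ∑ i, ∑ j with i < j, (f i j + f j i) = ∑ i, ∑ j with j ≠ i, f i j := by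
  have hswap : ∑ i, ∑ j with i < j, f j i = ∑ i, ∑ j with j < i, f i j :=
    sum_comm' (by simp)
  have hsplit (i : ι) :
      ∑ j with j ≠ i, f i j = ∑ j with i < j, f i j + ∑ j with j < i, f i j := by
    rw [← sum_union (disjoint_filter.mpr fun j _ => not_lt_of_gt), ← filter_or]
    simp only [ne_iff_gt_or_lt]
  simp only [sum_add_distrib, hswap, hsplit]

theorem sum_sum_lt_mul_sub_of_antisymm {R : Type*} [NonUnitalNonAssocRing R] {f : ι → ι → R}
    (hf : ∀ i j, f i j = -f j i) (v : ι → R) :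
    ∑ i, ∑ j with i < j, f i j * (v i - v j) = ∑ i, (∑ j with j ≠ i, f i j) * v i := by
  have hterm (i j : ι) : f i j * (v i - v j) = f i j * v i + f j i * v j := by
    rw [hf j i, neg_mul, ← sub_eq_add_neg, mul_sub]
  simp only [hterm, sum_mul, sum_sum_lt_add_eq_sum_sum_ne fun i j => f i j * v i]

end PairSums

theorem hasDerivAt_sin_sq {f : ℝ → ℝ} {f' x : ℝ} (hf : HasDerivAt f f' x) :
    HasDerivAt (fun y => sin (f y) ^ 2) (sin (2 * f x) * f') x := by
  refine (hf.sin.fun_pow 2).congr_deriv ?_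
  rw [sin_two_mul]
  ring

section LyapunovFunction

variable {ι : Type*} [Fintype ι]

/-- The vector field of the oscillator-based Ising machine, whose dynamics is
`θ̇ = isingDrift J μ θ`. -/
noncomputable def isingDrift [DecidableEq ι] (J : ι → ι → ℝ) (μ : ℝ) (θ : ι → ℝ) (i : ι) : ℝ :=
  -(∑ j with j ≠ i, J i j * sin (θ i - θ j)) - μ / 2 * sin (2 * θ i)

variable [LinearOrder ι]

/-- The penalized rank-two relaxation objective `L` of an Ising model with couplings `J` and penalty
coefficient `μ`. The order on `ι` only serves to count each unordered pair of oscillators once. -/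
noncomputable def penalizedObjective (J : ι → ι → ℝ) (μ : ℝ) (θ : ι → ℝ) : ℝ :=
  -(∑ i, ∑ j with i < j, J i j * cos (θ i - θ j)) + μ / 2 * ∑ i, sin (θ i) ^ 2

variable {J : ι → ι → ℝ} {θ : ℝ → ι → ℝ} {θ' : ι → ℝ} {t : ℝ}

theorem hasDerivAt_sum_sum_lt_mul_cos_sub (hJ : ∀ i j, J i j = J j i)
    (hθ : ∀ i, HasDerivAt (fun s => θ s i) (θ' i) t) :
    HasDerivAt (fun s => ∑ i, ∑ j with i < j, J i j * cos (θ s i - θ s j))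
      (-∑ i, (∑ j with j ≠ i, J i j * sin (θ t i - θ t j)) * θ' i) t := by
  have hantisymm (i j : ι) :
      J i j * sin (θ t i - θ t j) = -(J j i * sin (θ t j - θ t i)) := by
    rw [hJ i j, ← neg_sub (θ t j), sin_neg, mul_neg]
  have hterm (i j : ι) : HasDerivAt (fun s => J i j * cos (θ s i - θ s j))
      (-(J i j * sin (θ t i - θ t j) * (θ' i - θ' j))) t :=
    (((hθ i).fun_sub (hθ j)).cos.const_mul (J i j)).congr_deriv (by ring)
  rw [← sum_sum_lt_mul_sub_of_antisymm hantisymm θ']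
  simp only [← sum_neg_distrib]
  exact HasDerivAt.fun_sum fun i _ => HasDerivAt.fun_sum fun j _ => hterm i j

theorem hasDerivAt_penalizedObjective (hJ : ∀ i j, J i j = J j i) (μ : ℝ)
    (hθ : ∀ i, HasDerivAt (fun s => θ s i) (θ' i) t) :
    HasDerivAt (fun s => penalizedObjective J μ (θ s))
      (-∑ i, isingDrift J μ (θ t) i * θ' i) t := by
  have hcoupling := hasDerivAt_sum_sum_lt_mul_cos_sub hJ hθ
  have hpenalty : HasDerivAt (fun s => ∑ i, sin (θ s i) ^ 2) (∑ i, sin (2 * θ t i) * θ' i) t :=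
    HasDerivAt.fun_sum fun i _ => hasDerivAt_sin_sq (hθ i)
  refine (hcoupling.fun_neg.fun_add (hpenalty.const_mul (μ / 2))).congr_deriv ?_
  rw [neg_neg, mul_sum, ← sum_add_distrib, ← sum_neg_distrib]
  refine sum_congr rfl fun i _ => ?_
  rw [isingDrift]
  ring

theorem penalized_objective_is_lyapunov_general (hJ : ∀ i j, J i j = J j i) (μ : ℝ)
    (hθ : ∀ i, HasDerivAt (fun s => θ s i) (θ' i) t)
    (hdyn : ∀ i, θ' i = isingDrift J μ (θ t) i) :
    HasDerivAt (fun s => penalizedObjective J μ (θ s)) (-∑ i, θ' i ^ 2) t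
      ∧ -∑ i, θ' i ^ 2 ≤ 0 := by
  refine ⟨?_, neg_nonpos.mpr (sum_nonneg fun i _ => sq_nonneg (θ' i))⟩
  simpa only [← hdyn, ← sq] using hasDerivAt_penalizedObjective hJ μ hθ

end LyapunovFunction

/-- Along any solution of the oscillator-based Ising machine dynamics
`θ̇_i = -∑_{j≠i} J_ij sin(θ_i - θ_j) - (μ/2) sin(2θ_i)`, the penalized objective `L`
decreases: `(d/dt) L(θ(t)) = -∑_i θ̇_i(t)² ≤ 0`, i.e. `L` is a Lyapunov function. -/
theorem penalized_objective_is_lyapunov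
    (n : ℕ) (J : Fin n → Fin n → ℝ)
    (hsym : ∀ i j, J i j = J j i) (hdiag : ∀ i, J i i = 0)
    (μ : ℝ) (hμ : 0 ≤ μ)
    (L : (Fin n → ℝ) → ℝ)
    (hL : ∀ θ : Fin n → ℝ,
      L θ = -(∑ i : Fin n, ∑ j : Fin n, if i < j then J i j * Real.cos (θ i - θ j) else 0)
        + μ / 2 * ∑ i : Fin n, Real.sin (θ i) ^ 2)
    (θ : ℝ → Fin n → ℝ) (hθ : ∀ i, Differentiable ℝ fun t => θ t i)
    (hdyn : ∀ (t : ℝ) (i : Fin n), deriv (fun s => θ s i) t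
        = -(∑ j ∈ Finset.univ.filter (fun j => j ≠ i), J i j * Real.sin (θ t i - θ t j))
          - μ / 2 * Real.sin (2 * θ t i)) :
    ∀ t : ℝ,
      HasDerivAt (fun s => L (θ s)) (-∑ i : Fin n, (deriv (fun s => θ s i) t) ^ 2) t
      ∧ -∑ i : Fin n, (deriv (fun s => θ s i) t) ^ 2 ≤ 0 := by
  obtain rfl : L = penalizedObjective J μ := funext fun φ => by
    simp only [hL, penalizedObjective, sum_filter]
  exact fun t =>
    penalized_objective_is_lyapunov_general hsym μ (fun i => (hθ i t).hasDerivAt) (hdyn t)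
end

section
/- For every x ∈ [0, π], x / π ≥ 0.878 · (1 − cos x) / 2; equivalently, (2/π) · x / (1 − cos x) ≥ 0.878 for all x ∈ (0, π]. (This is the Goemans–Williamson approximation-ratio inequality for the cosine coupling.) -/
/-!
The inequality says that `(1 - cos x) / x` is at most `2 / (0.878 π) ≈ 0.72508` on `x > 0`. Its
maximum is about `0.72461`, attained near `x = 2.331`, so the line of slope `0.725` through the
origin lies above `1 - cos x`. Away from the maximum, `1 - cos x ≤ x² / 2` and `1 - cos x ≤ 2`
suffice; around it, expanding at `π`, i.e. in `y = π - x`, the quartic Taylor bound for `cos y` is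
accurate enough.
-/

open Real

theorem cos_le_one_sub_sq_div_two_add_pow_four_div (y : ℝ) :
    cos y ≤ 1 - y ^ 2 / 2 + y ^ 4 / 24 := by
  wlog hy : 0 ≤ y
  · simpa [Even.neg_pow (show Even 4 by decide)] using this (-y) (by linarith)
  rcases le_total (y ^ 2) 24 with hsmall | hlarge
  · have hcubic : 0 ≤ y / 2 - (y / 2) ^ 3 / 6 := by
      nlinarith [mul_nonneg hy (sub_nonneg.2 hsmall)]
    have hsin : (y / 2 - (y / 2) ^ 3 / 6) ^ 2 ≤ sin (y / 2) ^ 2 :=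
      pow_le_pow_left₀ hcubic (sin_ge_sub_cube (by linarith)) 2
    have hhalf : cos y = 1 - 2 * sin (y / 2) ^ 2 := by
      rw [sin_sq_eq_half_sub, mul_div_cancel₀ y two_ne_zero]
      ring
    calc cos y ≤ 1 - 2 * (y / 2 - (y / 2) ^ 3 / 6) ^ 2 := by linarith
      _ = 1 - y ^ 2 / 2 + y ^ 4 / 24 - y ^ 6 / 1152 := by ring
      _ ≤ 1 - y ^ 2 / 2 + y ^ 4 / 24 := sub_le_self _ (by positivity)
  · calc cos y ≤ 1 := cos_le_one y
      _ ≤ 1 - y ^ 2 / 2 + y ^ 4 / 24 := by nlinarith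

theorem two_sub_sq_div_two_add_pow_four_div_le {y : ℝ} (hy : |y| ≤ 2) :
    2 - y ^ 2 / 2 + y ^ 4 / 24 ≤ 0.725 * (3.1415 - y) := by
  obtain ⟨hy₁, hy₂⟩ := abs_le.1 hy
  -- The gap has its minimum near `0.815`; this is its quotient by `(y - 0.815) ^ 2`, and the
  -- remainder is the tangent line there.
  have hquot : 0 ≤ 1 / 2 - 0.815 ^ 2 / 8 - 0.815 / 12 * y - y ^ 2 / 24 := by nlinarith
  linarith [mul_nonneg hquot (sq_nonneg (y - 0.815))]

theorem one_add_cos_le_mul_pi_sub {y : ℝ} (hy : |y| ≤ 2) : 1 + cos y ≤ 0.725 * (π - y) :=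
  calc 1 + cos y ≤ 2 - y ^ 2 / 2 + y ^ 4 / 24 := by
        linarith [cos_le_one_sub_sq_div_two_add_pow_four_div y]
    _ ≤ 0.725 * (3.1415 - y) := two_sub_sq_div_two_add_pow_four_div_le hy
    _ ≤ 0.725 * (π - y) := by linarith [pi_gt_d4]

theorem one_sub_cos_le_mul {x : ℝ} (hx : 0 ≤ x) : 1 - cos x ≤ 0.725 * x := by
  rcases le_total x 1.45 with hsmall | hmid
  · calc 1 - cos x ≤ x ^ 2 / 2 := by linarith [one_sub_sq_div_two_le_cos (x := x)]
      _ ≤ 0.725 * x := by nlinarith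
  rcases le_total x 3 with hmid' | hlarge
  · have hy : |π - x| ≤ 2 := abs_le.2 ⟨by linarith [pi_gt_three], by linarith [pi_lt_d2]⟩
    simpa [cos_pi_sub, ← sub_eq_add_neg] using one_add_cos_le_mul_pi_sub hy
  · linarith [neg_one_le_cos x]

theorem mul_one_sub_cos_mul_pi_le {x : ℝ} (hx : 0 ≤ x) : 0.878 * (1 - cos x) * π ≤ 2 * x :=
  calc 0.878 * (1 - cos x) * π ≤ 0.878 * (0.725 * x) * 3.1416 := by
        gcongr
        · exact one_sub_cos_le_mul hx
        · exact pi_lt_d4.le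
    _ ≤ 2 * x := by linarith

theorem cos_ne_one_of_pos_of_lt_two_pi {x : ℝ} (hx : 0 < x) (hx' : x < 2 * π) : cos x ≠ 1 :=
  fun hcos ↦ hx.ne' ((cos_eq_one_iff_of_lt_of_lt (by linarith) hx').1 hcos)

theorem goemans_williamson_ratio_inequality_general :
    (∀ x : ℝ, 0 ≤ x → 0.878 * ((1 - cos x) / 2) ≤ x / π)
    ∧ (∀ x : ℝ, 0 < x → cos x ≠ 1 → 0.878 ≤ 2 / π * (x / (1 - cos x))) := by
  refine ⟨fun x hx ↦ ?_, fun x hx hcos ↦ ?_⟩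
  · rw [le_div_iff₀ pi_pos]
    linarith [mul_one_sub_cos_mul_pi_le hx]
  · have hpos : 0 < 1 - cos x := sub_pos.2 ((cos_le_one x).lt_of_ne hcos)
    rw [div_mul_div_comm, le_div_iff₀ (mul_pos pi_pos hpos)]
    linarith [mul_one_sub_cos_mul_pi_le hx.le]

/-- The Goemans–Williamson approximation-ratio inequality for the cosine
coupling: for every `x ∈ [0, π]`, `x / π ≥ 0.878 (1 - cos x) / 2`; equivalently, for every
`x ∈ (0, π]`, `(2/π) x / (1 - cos x) ≥ 0.878`. -/
theorem goemans_williamson_ratio_inequality :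
    (∀ x ∈ Set.Icc (0 : ℝ) Real.pi,
        0.878 * ((1 - Real.cos x) / 2) ≤ x / Real.pi)
    ∧ (∀ x ∈ Set.Ioc (0 : ℝ) Real.pi,
        (0.878 : ℝ) ≤ 2 / Real.pi * (x / (1 - Real.cos x))) :=
  ⟨fun x hx ↦ goemans_williamson_ratio_inequality_general.1 x hx.1,
    fun x hx ↦ goemans_williamson_ratio_inequality_general.2 x hx.1
      (cos_ne_one_of_pos_of_lt_two_pi hx.1 (by linarith [hx.2, pi_pos]))⟩
end
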